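/- Let f : ℝⁿ × ℝ^d → ℝⁿ be C¹, and let Λ : ℝ → ℝ^d be C¹ and exponentially bi-asymptotically constant with decay coefficient ρ > 0, with limits λ^± at ±∞. Suppose e⁻ ∈ ℝⁿ satisfies f(e⁻, λ⁻) = 0 and every complex root of the characteristic polynomial of D_x f(e⁻, λ⁻) has negative real part. Then for every r > 0 and α ∈ (0, ρ], the characteristic polynomial of the Fréchet derivative of F_{r,α} at (e⁻, −1) (within ℝⁿ × [−1,1]) has exactly one complex root with positive real part, namely the simple root α, and its remaining n complex roots all have negative real part. -/

import Mathlib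

open Filter Topology

/-- The time compactification map `g_α(τ) = tanh(ατ/2)`. -/
noncomputable def gcomp (α τ : ℝ) : ℝ := Real.tanh (α * τ / 2)

/-- Its inverse `h_α(s) = (1/α)·ln((1+s)/(1-s))`. -/
noncomputable def hcomp (α s : ℝ) : ℝ := (1 / α) * Real.log ((1 + s) / (1 - s))

/-- `Λ : ℝ → ℝ^d` is exponentially bi-asymptotically constant with decay coefficient `ρ`:
both limits `lim_{τ→+∞} Λ'(τ)·e^{ρτ}` and `lim_{τ→-∞} Λ'(τ)·e^{-ρτ}` exist. -/
def ExpBiAsympConst {d : ℕ} (Λ : ℝ → Fin d → ℝ) (ρ : ℝ) : Prop :=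
  (∃ Lp : Fin d → ℝ, Tendsto (fun τ => Real.exp (ρ * τ) • deriv Λ τ) atTop (𝓝 Lp)) ∧
  (∃ Lm : Fin d → ℝ, Tendsto (fun τ => Real.exp (-ρ * τ) • deriv Λ τ) atBot (𝓝 Lm))

/-- The compactified input `Λ_α : [-1,1] → ℝ^d`, equal to `Λ ∘ h_α` on `(-1,1)` and to the
future/past limits `lp`, `lm` at `s = 1`, `s = -1` respectively. -/
noncomputable def compInput {d : ℕ} (Λ : ℝ → Fin d → ℝ) (lp lm : Fin d → ℝ)
    (α s : ℝ) : Fin d → ℝ :=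
  if s = 1 then lp else if s = -1 then lm else Λ (hcomp α s)

/-- The compactified vector field `F_{r,α}(x,s) = (f(x,Λ_α(s))/r, α(1-s²)/2)` on `ℝⁿ × [-1,1]`. -/
noncomputable def compField {n d : ℕ} (f : (Fin n → ℝ) × (Fin d → ℝ) → Fin n → ℝ)
    (Λ : ℝ → Fin d → ℝ) (lp lm : Fin d → ℝ) (r α : ℝ) :
    (Fin n → ℝ) × ℝ → (Fin n → ℝ) × ℝ :=
  fun p => (r⁻¹ • f (p.1, compInput Λ lp lm α p.2), α * (1 - p.2 ^ 2) / 2)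

/-- The extended phase space `ℝⁿ × [-1,1]`. -/
def compDomain (n : ℕ) : Set ((Fin n → ℝ) × ℝ) := Set.univ ×ˢ Set.Icc (-1) 1

/-- The multiset of complex roots (with multiplicity) of a real polynomial. -/
noncomputable def complexRoots (p : Polynomial ℝ) : Multiset ℂ :=
  (p.map (algebraMap ℝ ℂ)).roots

/-!
The field is a skew product over the `s`-equation, so its derivative at `(e⁻, -1)` is block upper
triangular with diagonal blocks `r⁻¹ • D_x f(e⁻, λ⁻)` and `α = d/ds (α (1 - s²) / 2)` at `s = -1`.
The one delicate point is that this derivative exists, that is, that `Λ_α` is differentiable at the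
endpoint `s = -1`: the blow-up `h_α'(s) = 2 e^{-α h_α(s)} / (α (1 - s)²)` is exactly compensated by
the decay of `Λ'`, so the derivative of `Λ ∘ h_α` has a limit at `s = -1`.
-/

section Charpoly

open Polynomial

variable {R M N : Type*} [CommRing R] [AddCommGroup M] [Module R M] [Module.Free R M]
  [Module.Finite R M] [AddCommGroup N] [Module R N] [Module.Free R N] [Module.Finite R N]

theorem charpoly_coprod_prod_comp_snd (A : M →ₗ[R] M) (B : N →ₗ[R] M) (C : N →ₗ[R] N) :
    ((A.coprod B).prod (C ∘ₗ LinearMap.snd R M N)).charpoly = A.charpoly * C.charpoly := by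
  let b := Module.Free.chooseBasis R M
  let b' := Module.Free.chooseBasis R N
  have hblocks : LinearMap.toMatrix (b.prod b') (b.prod b')
      ((A.coprod B).prod (C ∘ₗ LinearMap.snd R M N)) =
        Matrix.fromBlocks (LinearMap.toMatrix b b A) (LinearMap.toMatrix b' b B) 0
          (LinearMap.toMatrix b' b' C) := by
    ext (i | i) (j | j) <;> simp [LinearMap.toMatrix_apply]
  rw [← LinearMap.charpoly_toMatrix _ (b.prod b'), hblocks, Matrix.charpoly_fromBlocks_zero₂₁,
    LinearMap.charpoly_toMatrix, LinearMap.charpoly_toMatrix]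

theorem charpoly_toSpanSingleton_self (a : R) :
    (LinearMap.toSpanSingleton R R a).charpoly = X - C a := by
  rw [← LinearMap.charpoly_toMatrix _ (Module.Basis.singleton Unit R)]
  simp [Matrix.charpoly, Matrix.charmatrix, LinearMap.toMatrix_apply]

theorem matrix_charpoly_smul {n : Type*} [Fintype n] [DecidableEq n] (c : R) (A : Matrix n n R) :
    (c • A).charpoly = A.charpoly.scaleRoots c := by
  nontriviality R
  ext i
  rw [coeff_scaleRoots, Matrix.charpoly_natDegree_eq_dim]
  rcases lt_or_ge (Fintype.card n) i with hi | hi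
  · rw [coeff_eq_zero_of_natDegree_lt (by simpa using hi),
      coeff_eq_zero_of_natDegree_lt (by simpa using hi), zero_mul]
  · obtain ⟨k, hk, rfl⟩ : ∃ k ≤ Fintype.card n, i = Fintype.card n - k :=
      ⟨Fintype.card n - i, Nat.sub_le _ _, (Nat.sub_sub_self hi).symm⟩
    rw [Matrix.charpoly_coeff_eq_sum_minors _ _ hk, Matrix.charpoly_coeff_eq_sum_minors _ _ hk,
      Nat.sub_sub_self hk, mul_assoc, Finset.sum_mul]
    congr 1
    refine Finset.sum_congr rfl fun s hs => ?_
    rw [Matrix.submatrix_smul, Pi.smul_apply, Pi.smul_apply, Matrix.det_smul, Fintype.card_coe,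
      (Finset.mem_powersetCard.mp hs).2, mul_comm]

theorem linearMap_charpoly_smul (c : R) (A : M →ₗ[R] M) :
    (c • A).charpoly = A.charpoly.scaleRoots c := by
  let b := Module.Free.chooseBasis R M
  rw [← LinearMap.charpoly_toMatrix (c • A) b, map_smul, matrix_charpoly_smul,
    LinearMap.charpoly_toMatrix]

end Charpoly

section ComplexRoots

open Polynomial

theorem card_complexRoots (p : ℝ[X]) : (complexRoots p).card = p.natDegree :=
  IsAlgClosed.card_roots_map_eq_natDegree_from_simpleRing _ p

theorem complexRoots_mul {p q : ℝ[X]} (hpq : p * q ≠ 0) :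
    complexRoots (p * q) = complexRoots p + complexRoots q := by
  have hmap : p.map (algebraMap ℝ ℂ) * q.map (algebraMap ℝ ℂ) ≠ 0 := by
    rwa [← Polynomial.map_mul, Polynomial.map_ne_zero_iff (algebraMap ℝ ℂ).injective]
  rw [complexRoots, Polynomial.map_mul, roots_mul hmap, complexRoots, complexRoots]

theorem complexRoots_X_sub_C (a : ℝ) : complexRoots (X - C a) = {(a : ℂ)} := by
  rw [complexRoots, Polynomial.map_sub, map_X, map_C, roots_X_sub_C, Complex.coe_algebraMap]

theorem complexRoots_scaleRoots (p : ℝ[X]) {c : ℝ} (hc : c ≠ 0) :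
    complexRoots (p.scaleRoots c) = (complexRoots p).map ((c : ℂ) * ·) := by
  rcases eq_or_ne p 0 with rfl | hp
  · simp [complexRoots]
  · rw [complexRoots, map_scaleRoots _ _ _ (by simpa using hp),
      roots_scaleRoots _ (by simpa using hc), complexRoots, Complex.coe_algebraMap]

theorem complexRoots_charpoly_smul_coprod_prod_toSpanSingleton {E : Type*} [AddCommGroup E]
    [Module ℝ E] [FiniteDimensional ℝ E] {c : ℝ} (hc : c ≠ 0) (A : E →ₗ[ℝ] E) (B : ℝ →ₗ[ℝ] E)
    (a : ℝ) :
    complexRoots (((c • A).coprod B).prod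
        (LinearMap.toSpanSingleton ℝ ℝ a ∘ₗ LinearMap.snd ℝ E ℝ)).charpoly =
      (a : ℂ) ::ₘ (complexRoots A.charpoly).map ((c : ℂ) * ·) := by
  have hne : (c • A).charpoly * (X - C a) ≠ 0 :=
    ((c • A).charpoly_monic.mul (monic_X_sub_C a)).ne_zero
  rw [charpoly_coprod_prod_comp_snd, charpoly_toSpanSingleton_self, complexRoots_mul hne,
    linearMap_charpoly_smul, complexRoots_scaleRoots _ hc, complexRoots_X_sub_C,
    add_comm, Multiset.singleton_add]

theorem filter_re_cons_map_mul {a c : ℝ} (ha : 0 < a) (hc : 0 < c) {S : Multiset ℂ}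
    (hS : ∀ z ∈ S, z.re < 0) :
    ((a : ℂ) ::ₘ S.map ((c : ℂ) * ·)).filter (fun z => 0 < z.re) = {(a : ℂ)} ∧
      ((a : ℂ) ::ₘ S.map ((c : ℂ) * ·)).filter (fun z => z.re < 0) = S.map ((c : ℂ) * ·) := by
  have hneg : ∀ z ∈ S.map ((c : ℂ) * ·), z.re < 0 := by
    simpa using fun z hz => mul_neg_of_pos_of_neg hc (hS z hz)
  constructor
  · rw [Multiset.filter_cons_of_pos _ (by simpa using ha),
      Multiset.filter_eq_nil.2 fun z hz => (hneg z hz).not_gt, Multiset.cons_zero]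
  · rw [Multiset.filter_cons_of_neg _ (by simpa using ha.le), Multiset.filter_eq_self.2 hneg]

end ComplexRoots

section TimeCompactification

variable {α : ℝ}

theorem exp_neg_mul_hcomp (hα : α ≠ 0) {s : ℝ} (hs : s ∈ Set.Ioo (-1) 1) :
    Real.exp (-α * hcomp α s) = (1 - s) / (1 + s) := by
  have hquot : 0 < (1 + s) / (1 - s) := div_pos (by linarith [hs.1]) (by linarith [hs.2])
  have hexponent : -α * hcomp α s = -Real.log ((1 + s) / (1 - s)) := by
    rw [hcomp]
    field_simp
  rw [hexponent, Real.exp_neg, Real.exp_log hquot, inv_div]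

theorem hasDerivAt_hcomp (hα : α ≠ 0) {s : ℝ} (hs : s ∈ Set.Ioo (-1) 1) :
    HasDerivAt (hcomp α) (2 / (α * (1 - s) ^ 2) * Real.exp (-α * hcomp α s)) s := by
  have hadd : 0 < 1 + s := by linarith [hs.1]
  have hsub : 0 < 1 - s := by linarith [hs.2]
  have hquot : HasDerivAt (fun t : ℝ => (1 + t) / (1 - t))
      ((1 * (1 - s) - (1 + s) * (-1)) / (1 - s) ^ 2) s :=
    ((hasDerivAt_id s).const_add 1).div ((hasDerivAt_id s).const_sub 1) hsub.ne'
  refine ((hquot.log (div_pos hadd hsub).ne').const_mul (1 / α)).congr_deriv ?_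
  rw [exp_neg_mul_hcomp hα hs]
  field_simp
  ring

theorem tendsto_hcomp_neg_one (hα : 0 < α) : Tendsto (hcomp α) (𝓝[>] (-1)) atBot := by
  have hcont : ContinuousAt (fun s : ℝ => (1 + s) / (1 - s)) (-1) :=
    ContinuousAt.div (by fun_prop) (by fun_prop) (by norm_num)
  have hpos : ∀ᶠ s : ℝ in 𝓝[>] (-1), 0 < (1 + s) / (1 - s) := by
    filter_upwards [Ioo_mem_nhdsGT (show (-1 : ℝ) < 1 by norm_num)] with s hs
    exact div_pos (by linarith [hs.1]) (by linarith [hs.2])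
  have hquot : Tendsto (fun s : ℝ => (1 + s) / (1 - s)) (𝓝[>] (-1)) (𝓝[>] 0) :=
    tendsto_nhdsWithin_iff.2
      ⟨by simpa using hcont.tendsto.mono_left nhdsWithin_le_nhds, hpos⟩
  exact (Real.tendsto_log_nhdsGT_zero.comp hquot).const_mul_atBot (by positivity)

theorem compInput_eventuallyEq_comp_hcomp {d : ℕ} (Λ : ℝ → Fin d → ℝ) (lp lm : Fin d → ℝ) :
    compInput Λ lp lm α =ᶠ[𝓝[>] (-1)] Λ ∘ hcomp α := by
  filter_upwards [Ioo_mem_nhdsGT (show (-1 : ℝ) < 1 by norm_num)] with s hs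
  simp [compInput, hs.1.ne', hs.2.ne]

theorem hasDerivAt_mul_one_sub_sq_div_two (s : ℝ) :
    HasDerivAt (fun t : ℝ => α * (1 - t ^ 2) / 2) (-α * s) s :=
  (((hasDerivAt_pow 2 s).const_sub 1).const_mul α |>.div_const 2).congr_deriv (by ring)

end TimeCompactification

section SkewProduct

variable {𝕜 E F G : Type*} [NontriviallyNormedField 𝕜] [NormedAddCommGroup E] [NormedSpace 𝕜 E]
  [NormedAddCommGroup F] [NormedSpace 𝕜 F] [NormedAddCommGroup G] [NormedSpace 𝕜 G]

theorem hasFDerivWithinAt_skewProduct {f : E × G → F} {D : E × G →L[𝕜] F} {γ : 𝕜 → G} {v : G}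
    {g : 𝕜 → 𝕜} {a : 𝕜} {S : Set 𝕜} {x : E} {t : 𝕜} (hf : HasFDerivAt f D (x, γ t))
    (hγ : HasDerivWithinAt γ v S t) (hg : HasDerivWithinAt g a S t) :
    HasFDerivWithinAt (fun p : E × 𝕜 => (f (p.1, γ p.2), g p.2))
      (((D ∘L .inl 𝕜 E G).coprod (D ∘L .inr 𝕜 E G ∘L .toSpanSingleton 𝕜 v)).prod
        (.toSpanSingleton 𝕜 a ∘L .snd 𝕜 E 𝕜)) (Set.univ ×ˢ S) (x, t) := by
  have hmaps : Set.MapsTo Prod.snd (Set.univ ×ˢ S : Set (E × 𝕜)) S := fun p hp => hp.2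
  have hsnd : HasFDerivWithinAt Prod.snd (.snd 𝕜 E 𝕜) (Set.univ ×ˢ S) (x, t) :=
    hasFDerivWithinAt_snd
  have hpair : HasFDerivWithinAt (fun p : E × 𝕜 => (p.1, γ p.2)) _ (Set.univ ×ˢ S) (x, t) :=
    hasFDerivWithinAt_fst.prodMk (hγ.hasFDerivWithinAt.comp (x, t) hsnd hmaps)
  have hfst := hf.comp_hasFDerivWithinAt (x, t) hpair
  refine (hfst.prodMk (hg.hasFDerivWithinAt.comp (x, t) hsnd hmaps)).congr_fderiv ?_
  ext <;> simp [← Prod.zero_eq_mk]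

end SkewProduct

section EndpointDerivative

variable {G : Type*} [NormedAddCommGroup G] [NormedSpace ℝ G]

theorem exists_tendsto_exp_smul_atBot_of_le {u : ℝ → G} {α ρ : ℝ} (hαρ : α ≤ ρ) {w : G}
    (hu : Tendsto (fun τ => Real.exp (-ρ * τ) • u τ) atBot (𝓝 w)) :
    ∃ w' : G, Tendsto (fun τ => Real.exp (-α * τ) • u τ) atBot (𝓝 w') := by
  rcases hαρ.eq_or_lt with rfl | hlt
  · exact ⟨w, hu⟩
  · have hexp : Tendsto (fun τ : ℝ => Real.exp ((ρ - α) * τ)) atBot (𝓝 0) :=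
      Real.tendsto_exp_atBot.comp (tendsto_id.const_mul_atBot (sub_pos.2 hlt))
    refine ⟨(0 : ℝ) • w, (hexp.smul hu).congr fun τ => ?_⟩
    rw [smul_smul, ← Real.exp_add]
    ring_nf

theorem hasDerivWithinAt_neg_one_of_tendsto_exp_smul_deriv {Λ γ : ℝ → G} {α : ℝ} (hα : 0 < α)
    {w : G} (hΛ : ∀ᶠ τ in atBot, DifferentiableAt ℝ Λ τ)
    (hlim : Tendsto Λ atBot (𝓝 (γ (-1))))
    (hw : Tendsto (fun τ => Real.exp (-α * τ) • deriv Λ τ) atBot (𝓝 w))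
    (hγ : γ =ᶠ[𝓝[>] (-1)] Λ ∘ hcomp α) :
    HasDerivWithinAt γ ((1 / (2 * α)) • w) (Set.Ici (-1)) (-1) := by
  have hbot := tendsto_hcomp_neg_one hα
  have hderiv : ∀ᶠ s in 𝓝[>] (-1), HasDerivAt γ
      ((2 / (α * (1 - s) ^ 2)) • Real.exp (-α * hcomp α s) • deriv Λ (hcomp α s)) s := by
    filter_upwards [eventually_eventually_nhdsWithin.2 hγ, hbot.eventually hΛ,
      Ioo_mem_nhdsGT (show (-1 : ℝ) < 1 by norm_num)] with s hs hdiff hmem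
    rw [isOpen_Ioi.nhdsWithin_eq hmem.1] at hs
    rw [smul_smul]
    exact (hdiff.hasDerivAt.scomp s (hasDerivAt_hcomp hα.ne' hmem)).congr_of_eventuallyEq hs
  have hcont : ContinuousWithinAt γ (Set.Ioi (-1)) (-1) := (hlim.comp hbot).congr' hγ.symm
  have hcoeff : Tendsto (fun s : ℝ => 2 / (α * (1 - s) ^ 2)) (𝓝[>] (-1)) (𝓝 (1 / (2 * α))) := by
    have hat : ContinuousAt (fun s : ℝ => 2 / (α * (1 - s) ^ 2)) (-1) :=
      ContinuousAt.div (by fun_prop) (by fun_prop) (by norm_num [hα.ne'])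
    convert hat.tendsto.mono_left nhdsWithin_le_nhds using 2
    field_simp
    norm_num
  obtain ⟨s, hs, hsderiv⟩ := (hderiv.and self_mem_nhdsWithin).exists_mem
  exact hasDerivWithinAt_Ici_of_tendsto_deriv
    (fun t ht => (hsderiv t ht).1.differentiableAt.differentiableWithinAt)
    (hcont.mono fun t ht => (hsderiv t ht).2) hs
    ((hcoeff.smul (hw.comp hbot)).congr' (hderiv.mono fun t ht => ht.deriv.symm))

end EndpointDerivative

section CompactifiedField

variable {E G : Type*} [NormedAddCommGroup E] [NormedSpace ℝ E] [FiniteDimensional ℝ E]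
  [NormedAddCommGroup G] [NormedSpace ℝ G] {f : E × G → E} {x : E} {Λ γ : ℝ → G} {l : G}
  {α ρ r : ℝ}

theorem exists_hasFDerivWithinAt_complexRoots_charpoly_eq_cons
    (hf : DifferentiableAt ℝ f (x, l)) (hΛ : ∀ᶠ τ in atBot, DifferentiableAt ℝ Λ τ)
    (hw : ∃ w, Tendsto (fun τ => Real.exp (-ρ * τ) • deriv Λ τ) atBot (𝓝 w))
    (hl : Tendsto Λ atBot (𝓝 l)) (hα : 0 < α) (hαρ : α ≤ ρ)
    (hγ : γ =ᶠ[𝓝[>] (-1)] Λ ∘ hcomp α) (hγl : γ (-1) = l) (hr : r ≠ 0) :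
    ∃ L : (E × ℝ) →L[ℝ] (E × ℝ),
      HasFDerivWithinAt (fun p : E × ℝ => (r⁻¹ • f (p.1, γ p.2), α * (1 - p.2 ^ 2) / 2)) L
        (Set.univ ×ˢ Set.Ici (-1)) (x, -1) ∧
      complexRoots L.toLinearMap.charpoly = (α : ℂ) ::ₘ
        (complexRoots (fderiv ℝ (fun y => f (y, l)) x).toLinearMap.charpoly).map
          (((r⁻¹ : ℝ) : ℂ) * ·) := by
  subst hγl
  obtain ⟨w, hw⟩ := exists_tendsto_exp_smul_atBot_of_le hαρ hw.choose_spec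
  have hγderiv := hasDerivWithinAt_neg_one_of_tendsto_exp_smul_deriv hα hΛ hl hw hγ
  have hpartial : fderiv ℝ (fun y => f (y, γ (-1))) x =
      fderiv ℝ f (x, γ (-1)) ∘L .inl ℝ E G :=
    (hf.hasFDerivAt.comp x (hasFDerivAt_prodMk_left x (γ (-1)))).fderiv
  have hg : HasDerivAt (fun s : ℝ => α * (1 - s ^ 2) / 2) α (-1) := by
    simpa using hasDerivAt_mul_one_sub_sq_div_two (-1)
  refine ⟨_, hasFDerivWithinAt_skewProduct (hf.hasFDerivAt.const_smul r⁻¹) hγderiv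
    hg.hasDerivWithinAt, ?_⟩
  rw [hpartial, ContinuousLinearMap.smul_comp]
  exact complexRoots_charpoly_smul_coprod_prod_toSpanSingleton (inv_ne_zero hr) _ _ α

theorem stmt10_general (hf : DifferentiableAt ℝ f (x, l))
    (hΛ : ∀ᶠ τ in atBot, DifferentiableAt ℝ Λ τ)
    (hw : ∃ w, Tendsto (fun τ => Real.exp (-ρ * τ) • deriv Λ τ) atBot (𝓝 w))
    (hl : Tendsto Λ atBot (𝓝 l))
    (hsink : ∀ z ∈ complexRoots (fderiv ℝ (fun y => f (y, l)) x).toLinearMap.charpoly, z.re < 0)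
    (hr : 0 < r) (hα : 0 < α) (hαρ : α ≤ ρ)
    (hγ : γ =ᶠ[𝓝[>] (-1)] Λ ∘ hcomp α) (hγl : γ (-1) = l) :
    ∃ L : (E × ℝ) →L[ℝ] (E × ℝ),
      HasFDerivWithinAt (fun p : E × ℝ => (r⁻¹ • f (p.1, γ p.2), α * (1 - p.2 ^ 2) / 2)) L
        (Set.univ ×ˢ Set.Ici (-1)) (x, -1) ∧
      (complexRoots L.toLinearMap.charpoly).filter (fun z => 0 < z.re) = {(α : ℂ)} ∧
      ((complexRoots L.toLinearMap.charpoly).filter (fun z => z.re < 0)).card =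
        Module.finrank ℝ E := by
  obtain ⟨L, hL, hroots⟩ :=
    exists_hasFDerivWithinAt_complexRoots_charpoly_eq_cons hf hΛ hw hl hα hαρ hγ hγl hr.ne'
  obtain ⟨hpos, hneg⟩ := filter_re_cons_map_mul hα (inv_pos.2 hr) hsink
  refine ⟨L, hL, by rw [hroots, hpos], ?_⟩
  rw [hroots, hneg, Multiset.card_map, card_complexRoots, LinearMap.charpoly_natDegree]

end CompactifiedField

/-- If `e⁻` is a hyperbolic sink of the past limit system (all complex
eigenvalues of `D_x f(e⁻,λ⁻)` have negative real part), then for every `r > 0` and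
`α ∈ (0,ρ]`, the characteristic polynomial of the derivative of `F_{r,α}` at `(e⁻,-1)` has
exactly one complex root of positive real part, namely the simple root `α`, and its remaining
`n` complex roots all have negative real part. -/
theorem stmt10 {n d : ℕ} (f : (Fin n → ℝ) × (Fin d → ℝ) → Fin n → ℝ)
    (hf : ContDiff ℝ 1 f)
    (Λ : ℝ → Fin d → ℝ) (ρ : ℝ) (hρ : 0 < ρ)
    (hΛ : ContDiff ℝ 1 Λ) (hbac : ExpBiAsympConst Λ ρ)
    (lp lm : Fin d → ℝ)
    (hp : Tendsto Λ atTop (𝓝 lp)) (hm : Tendsto Λ atBot (𝓝 lm))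
    (em : Fin n → ℝ) (heq : f (em, lm) = 0)
    (hsink : ∀ z ∈ complexRoots
        (fderiv ℝ (fun x => f (x, lm)) em).toLinearMap.charpoly, z.re < 0) :
    ∀ r > (0 : ℝ), ∀ α ∈ Set.Ioc (0 : ℝ) ρ,
      ∃ L : ((Fin n → ℝ) × ℝ) →L[ℝ] ((Fin n → ℝ) × ℝ),
        HasFDerivWithinAt (compField f Λ lp lm r α) L (compDomain n) (em, -1) ∧
        Multiset.filter (fun z : ℂ => 0 < z.re)
          (complexRoots L.toLinearMap.charpoly) = {(α : ℂ)} ∧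
        (Multiset.filter (fun z : ℂ => z.re < 0)
          (complexRoots L.toLinearMap.charpoly)).card = n := by
  intro r hr α ⟨hα, hαρ⟩
  obtain ⟨L, hL, hpos, hneg⟩ := stmt10_general (hf.differentiable one_ne_zero _)
    (.of_forall (hΛ.differentiable one_ne_zero)) hbac.2 hm hsink hr hα hαρ
    (compInput_eventuallyEq_comp_hcomp Λ lp lm) (by norm_num [compInput])
  exact ⟨L, hL.mono (Set.prod_mono_right Set.Icc_subset_Ici_self), hpos,
    hneg.trans (Module.finrank_fin_fun ℝ)⟩
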